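/- arXiv:2511.01660 — 4 statements merged into one kernel-verified Lean document; each statement's English description precedes it below -/
import Mathlib

section
/- Let q ∈ ℂ with |q| ≥ 3 and set ρ = |q|/2. For each integer j ≥ 2 let c_j : ℂ ∖ {0} → ℂ satisfy |c_j(w)| ≤ 2^{j−1}/|w| for all w ≠ 0. Let y : ℂ → ℂ satisfy |y(w)| ≤ 1/|q| for all w ∈ D(ρ) and y(z/q) = y(z)/|q| for all z ∈ D(ρ). Then for every z ∈ D(ρ), the series ∑_{j=2}^{∞} c_j(z/q) y(z/q)^j converges absolutely and its sum T[y](z) satisfies |T[y](z)| ≤ 4/(|q|⁴ − 2|q|²) ≤ 1/|q|. -/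
/-!
For `|Re z| ≥ |q| / 2` one has `|z / q| ≥ 1 / 2`, so the coefficient bound gives
`|c_j (z / q)| ≤ 2 ^ j`, while the scaling relation gives `|y (z / q)| ≤ 1 / |q| ^ 2`. The series is
therefore dominated by the geometric tail `∑_{j ≥ 2} (2 / |q| ^ 2) ^ j = 4 / (|q| ^ 4 - 2 |q| ^ 2)`.
Writing `Q = |q|`, this is at most `1 / Q` for `Q ≥ 2` because
`Q ^ 3 - 2 Q - 4 = (Q - 2) (Q ^ 2 + 2 Q + 2)`.
-/

theorem hasSum_geometric_add_of_norm_lt_one {K : Type*} [NormedDivisionRing K] {ξ : K}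
    (h : ‖ξ‖ < 1) (k : ℕ) : HasSum (fun n : ℕ => ξ ^ (n + k)) ((1 - ξ)⁻¹ * ξ ^ k) := by
  simpa only [pow_add] using (hasSum_geometric_of_norm_lt_one h).mul_right (ξ ^ k)

section PowerSeriesTail

variable {A : Type*} [SeminormedRing A] {a : ℕ → A} {x : A} {R r : ℝ} {k : ℕ}

theorem norm_mul_pow_le_mul_pow {b : A} {n : ℕ} (hn : 0 < n) (hR : 0 ≤ R) (hb : ‖b‖ ≤ R ^ n)
    (hx : ‖x‖ ≤ r) : ‖b * x ^ n‖ ≤ (R * r) ^ n :=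
  calc ‖b * x ^ n‖ ≤ ‖b‖ * ‖x‖ ^ n :=
        norm_mul_le_of_le le_rfl (norm_pow_le' x hn)
    _ ≤ R ^ n * r ^ n := by gcongr
    _ = (R * r) ^ n := (mul_pow R r n).symm

theorem summable_norm_and_tsum_norm_mul_pow_add_le (hk : 0 < k) (hR : 0 ≤ R)
    (ha : ∀ n, k ≤ n → ‖a n‖ ≤ R ^ n) (hx : ‖x‖ ≤ r) (hRr : R * r < 1) :
    Summable (fun n : ℕ => ‖a (n + k) * x ^ (n + k)‖) ∧
      ∑' n : ℕ, ‖a (n + k) * x ^ (n + k)‖ ≤ (1 - R * r)⁻¹ * (R * r) ^ k := by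
  have hRr_nonneg : 0 ≤ R * r := mul_nonneg hR ((norm_nonneg x).trans hx)
  have hgeom := hasSum_geometric_add_of_norm_lt_one
    ((Real.norm_of_nonneg hRr_nonneg).trans_lt hRr) k
  have hterm (n : ℕ) : ‖a (n + k) * x ^ (n + k)‖ ≤ (R * r) ^ (n + k) :=
    norm_mul_pow_le_mul_pow (by lia) hR (ha _ (by lia)) hx
  have hsum : Summable fun n : ℕ => ‖a (n + k) * x ^ (n + k)‖ :=
    .of_nonneg_of_le (fun _ => norm_nonneg _) hterm hgeom.summable
  exact ⟨hsum, hasSum_le hterm hsum.hasSum hgeom⟩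

end PowerSeriesTail

theorem pow_sub_one_div_le_pow {K : Type*} [Field K] [LinearOrder K] [IsStrictOrderedRing K]
    {R s : K} (hR : 0 < R) (hs : R⁻¹ ≤ s) {j : ℕ} (hj : j ≠ 0) : R ^ (j - 1) / s ≤ R ^ j :=
  calc R ^ (j - 1) / s ≤ R ^ (j - 1) / R⁻¹ := by gcongr
    _ = R ^ (j - 1) * R := div_inv_eq_mul _ _
    _ = R ^ j := pow_sub_one_mul hj R

theorem inv_one_sub_mul_sq_two_mul_one_div_sq {K : Type*} [Field K] {Q : K} (hQ : Q ≠ 0) :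
    (1 - 2 * (1 / Q ^ 2))⁻¹ * (2 * (1 / Q ^ 2)) ^ 2 = 4 / (Q ^ 4 - 2 * Q ^ 2) := by
  have hfactor : Q ^ 4 - 2 * Q ^ 2 = Q ^ 4 * (1 - 2 * (1 / Q ^ 2)) := by field_simp
  have hsq : (2 * (1 / Q ^ 2)) ^ 2 = 4 / Q ^ 4 := by field_simp; norm_num
  rw [hfactor, hsq, ← div_div, div_eq_inv_mul (4 / Q ^ 4)]

theorem four_div_pow_four_sub_le_one_div {Q : ℝ} (hQ : 2 ≤ Q) :
    4 / (Q ^ 4 - 2 * Q ^ 2) ≤ 1 / Q := by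
  have hQ_pos : 0 < Q := by linarith
  have hcubic : 0 ≤ Q * ((Q - 2) * (Q ^ 2 + 2 * Q + 2)) :=
    mul_nonneg hQ_pos.le (mul_nonneg (sub_nonneg.2 hQ) (by positivity))
  have hden : 4 * Q ≤ Q ^ 4 - 2 * Q ^ 2 := by linarith
  calc 4 / (Q ^ 4 - 2 * Q ^ 2) ≤ 4 / (4 * Q) :=
        div_le_div_of_nonneg_left zero_le_four (by positivity) hden
    _ = 1 / Q := by field_simp

theorem stmt10_general {K A : Type*} [NormedDivisionRing K] [SeminormedRing A] {q z : K}
    (hq : 2 ≤ ‖q‖) (hz : ‖q‖ / 2 ≤ ‖z‖) {c : ℕ → K → A}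
    (hc : ∀ j : ℕ, 2 ≤ j → ‖c j (z / q)‖ ≤ 2 ^ (j - 1) / ‖z / q‖)
    {y : K → A} (hybd : ‖y z‖ ≤ 1 / ‖q‖) (hyscale : ‖y (z / q)‖ ≤ ‖y z‖ / ‖q‖) :
    Summable (fun n : ℕ => ‖c (n + 2) (z / q) * y (z / q) ^ (n + 2)‖) ∧
      ∑' n : ℕ, ‖c (n + 2) (z / q) * y (z / q) ^ (n + 2)‖ ≤ 4 / (‖q‖ ^ 4 - 2 * ‖q‖ ^ 2) ∧
      4 / (‖q‖ ^ 4 - 2 * ‖q‖ ^ 2) ≤ 1 / ‖q‖ := by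
  have hq_pos : 0 < ‖q‖ := by linarith
  have hw : 2⁻¹ ≤ ‖z / q‖ := by
    rw [norm_div, le_div_iff₀ hq_pos]
    linarith
  have hcoeff (j : ℕ) (hj : 2 ≤ j) : ‖c j (z / q)‖ ≤ 2 ^ j :=
    (hc j hj).trans (pow_sub_one_div_le_pow two_pos hw (by lia))
  have hy : ‖y (z / q)‖ ≤ 1 / ‖q‖ ^ 2 :=
    calc ‖y (z / q)‖ ≤ 1 / ‖q‖ / ‖q‖ := hyscale.trans (by gcongr)
      _ = 1 / ‖q‖ ^ 2 := by rw [div_div, sq]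
  have hratio : 2 * (1 / ‖q‖ ^ 2) < 1 := by
    rw [mul_one_div, div_lt_one (by positivity)]
    nlinarith
  obtain ⟨hsum, hle⟩ :=
    summable_norm_and_tsum_norm_mul_pow_add_le two_pos zero_le_two hcoeff hy hratio
  rw [inv_one_sub_mul_sq_two_mul_one_div_sq hq_pos.ne'] at hle
  exact ⟨hsum, hle, four_div_pow_four_sub_le_one_div hq⟩

/-- The series `T[y](z) = ∑_{j≥2} c_j(z/q) y(z/q)^j`
converges absolutely on `D(ρ)` with `ρ = |q|/2`, `|q| ≥ 3`, and its sum is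
bounded by `4/(|q|⁴ - 2|q|²) ≤ 1/|q|`. -/
theorem stmt10 (q : ℂ) (hq : 3 ≤ ‖q‖)
    (c : ℕ → ℂ → ℂ)
    (hc : ∀ j : ℕ, 2 ≤ j → ∀ w : ℂ, w ≠ 0 → ‖c j w‖ ≤ 2 ^ (j - 1) / ‖w‖)
    (y : ℂ → ℂ)
    (hybd : ∀ w : ℂ, ‖q‖ / 2 ≤ |w.re| → ‖y w‖ ≤ 1 / ‖q‖)
    (hyscale : ∀ z : ℂ, ‖q‖ / 2 ≤ |z.re| → y (z / q) = y z / (‖q‖ : ℂ)) :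
    ∀ z : ℂ, ‖q‖ / 2 ≤ |z.re| →
      Summable (fun n : ℕ => ‖c (n + 2) (z / q) * y (z / q) ^ (n + 2)‖) ∧
      ‖∑' n : ℕ, c (n + 2) (z / q) * y (z / q) ^ (n + 2)‖ ≤
        4 / (‖q‖ ^ 4 - 2 * ‖q‖ ^ 2) ∧
      4 / (‖q‖ ^ 4 - 2 * ‖q‖ ^ 2) ≤ 1 / ‖q‖ := by
  intro z hz
  have hz_norm : ‖q‖ / 2 ≤ ‖z‖ := hz.trans (Complex.abs_re_le_norm z)
  have hw : z / q ≠ 0 := div_ne_zero (norm_pos_iff.1 (by linarith)) (norm_pos_iff.1 (by linarith))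
  have hscale : ‖y (z / q)‖ = ‖y z‖ / ‖q‖ := by
    rw [hyscale z hz, norm_div, Complex.norm_real, norm_norm]
  obtain ⟨hsum, hle, hbound⟩ := stmt10_general (by linarith) hz_norm
    (fun j hj => hc j hj _ hw) (hybd z hz) hscale.le
  exact ⟨hsum, (norm_tsum_le_tsum_norm hsum).trans hle, hbound⟩
end

section
/- Let q ∈ ℂ with |q| ≥ 3 and set ρ = |q|/2. For each integer j ≥ 2 let c_j : ℂ ∖ {0} → ℂ satisfy |c_j(w)| ≤ 2^{j−1}/|w| for all w ≠ 0. Let y, h : ℂ → ℂ both satisfy |y(w)| ≤ 1/|q| and |h(w)| ≤ 1/|q| for all w ∈ D(ρ), together with y(z/q) = y(z)/|q| and h(z/q) = h(z)/|q| for all z ∈ D(ρ). Define T[y](z) = ∑_{j=2}^{∞} c_j(z/q) y(z/q)^j and similarly T[h](z). Then for every z ∈ D(ρ), one has |T[y](z) − T[h](z)| ≤ (1/|z|) · sup_{w ∈ D(ρ)} |y(w) − h(w)|. -/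
/-!
At `z ∈ D(ρ)` write `a = y (z / q)` and `b = h (z / q)`. The scaling relations give
`‖a‖, ‖b‖ ≤ 1 / ‖q‖ ^ 2` and `‖a - b‖ ≤ S / ‖q‖`, where `S` is the supremum. Since
`‖a ^ j - b ^ j‖ ≤ j * (1 / ‖q‖ ^ 2) ^ (j - 1) * ‖a - b‖` and
`‖c_j (z / q)‖ ≤ 2 ^ (j - 1) * ‖q‖ / ‖z‖`, the bare factor `‖q‖` cancels and the `j`-th terms
differ by at most `j * x ^ (j - 1) * S / ‖z‖` with `x = 2 / ‖q‖ ^ 2`. Summing over `j ≥ 2` gives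
`((1 - x)⁻² - 1) * S / ‖z‖`, and for `x < 1` one has `(1 - x)⁻² ≤ 2` exactly when
`‖q‖ ^ 2 ≥ 4 + 2 * √2`, a threshold below `9`.
-/

theorem norm_pow_succ_sub_pow_succ_le {R : Type*} [SeminormedRing R] {a b : R} {r : ℝ}
    (ha : ‖a‖ ≤ r) (hb : ‖b‖ ≤ r) (n : ℕ) :
    ‖a ^ (n + 1) - b ^ (n + 1)‖ ≤ (n + 1) * r ^ n * ‖a - b‖ := by
  have hr : 0 ≤ r := (norm_nonneg a).trans ha
  induction n with
  | zero => simp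
  | succ n ih =>
    have hb_pow : ‖b ^ (n + 1)‖ ≤ r ^ (n + 1) := (norm_pow_le' b n.succ_pos).trans (by gcongr)
    calc ‖a ^ (n + 1 + 1) - b ^ (n + 1 + 1)‖
        = ‖a * (a ^ (n + 1) - b ^ (n + 1)) + (a - b) * b ^ (n + 1)‖ := by
          rw [pow_succ' a (n + 1), pow_succ' b (n + 1)]
          congr 1
          noncomm_ring
      _ ≤ ‖a‖ * ‖a ^ (n + 1) - b ^ (n + 1)‖ + ‖a - b‖ * ‖b ^ (n + 1)‖ :=
          norm_add_le_of_le (norm_mul_le _ _) (norm_mul_le _ _)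
      _ ≤ r * ((n + 1) * r ^ n * ‖a - b‖) + ‖a - b‖ * r ^ (n + 1) := by gcongr
      _ = ((n + 1 : ℕ) + 1) * r ^ (n + 1) * ‖a - b‖ := by push_cast; ring

theorem hasSum_add_two_mul_geometric {𝕜 : Type*} [NormedDivisionRing 𝕜] {x : 𝕜} (hx : ‖x‖ < 1) :
    HasSum (fun n : ℕ => (n + 2) * x ^ (n + 1)) (((1 - x) ^ 2)⁻¹ - 1) := by
  have hsum := hasSum_choose_mul_geometric_of_norm_lt_one 1 hx
  simpa [add_assoc, one_add_one_eq_two] using (hasSum_nat_add_iff' 1).2 hsum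

section PowerSeries

variable {A : Type*} [NormedRing A] [CompleteSpace A] {d : ℕ → A} {K M r : ℝ}

theorem summable_mul_pow_add_two (hd : ∀ n, ‖d n‖ ≤ M ^ (n + 1) * K) {a : A} (ha : ‖a‖ ≤ r)
    (hM : 0 ≤ M) (hMr : M * r < 1) : Summable fun n => d n * a ^ (n + 2) := by
  have hr : 0 ≤ r := (norm_nonneg a).trans ha
  have hgeom : Summable fun n => M * K * r ^ 2 * (M * r) ^ n :=
    (summable_geometric_of_lt_one (by positivity) hMr).mul_left _
  refine .of_norm_bounded hgeom fun n => ?_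
  calc ‖d n * a ^ (n + 2)‖ ≤ ‖d n‖ * ‖a‖ ^ (n + 2) :=
        (norm_mul_le _ _).trans (by gcongr; exact norm_pow_le' a (by omega))
    _ ≤ M ^ (n + 1) * K * r ^ (n + 2) :=
        mul_le_mul (hd n) (by gcongr) (by positivity) ((norm_nonneg _).trans (hd n))
    _ = M * K * r ^ 2 * (M * r) ^ n := by ring

theorem norm_tsum_mul_pow_sub_tsum_mul_pow_le (hd : ∀ n, ‖d n‖ ≤ M ^ (n + 1) * K) {a b : A}
    (ha : ‖a‖ ≤ r) (hb : ‖b‖ ≤ r) (hM : 0 ≤ M) (hMr : M * r < 1) :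
    ‖∑' n, d n * a ^ (n + 2) - ∑' n, d n * b ^ (n + 2)‖ ≤
      (((1 - M * r) ^ 2)⁻¹ - 1) * (K * ‖a - b‖) := by
  have hr : 0 ≤ r := (norm_nonneg a).trans ha
  have hx : ‖M * r‖ < 1 := by rwa [Real.norm_of_nonneg (by positivity)]
  rw [← (summable_mul_pow_add_two hd ha hM hMr).tsum_sub (summable_mul_pow_add_two hd hb hM hMr)]
  refine tsum_of_norm_bounded ((hasSum_add_two_mul_geometric hx).mul_right _) fun n => ?_
  calc ‖d n * a ^ (n + 2) - d n * b ^ (n + 2)‖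
      ≤ ‖d n‖ * ‖a ^ (n + 2) - b ^ (n + 2)‖ := by
        rw [← mul_sub]
        exact norm_mul_le _ _
    _ ≤ M ^ (n + 1) * K * (((n + 1 : ℕ) + 1) * r ^ (n + 1) * ‖a - b‖) :=
        mul_le_mul (hd n) (norm_pow_succ_sub_pow_succ_le ha hb (n + 1)) (norm_nonneg _)
          ((norm_nonneg _).trans (hd n))
    _ = (n + 2) * (M * r) ^ (n + 1) * (K * ‖a - b‖) := by push_cast; ring

end PowerSeries

theorem inv_one_sub_sq_sub_one_le_one {x : ℝ} (hx : x ≤ 1 - √2 / 2) :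
    ((1 - x) ^ 2)⁻¹ - 1 ≤ 1 := by
  have hsq : 1 / 2 ≤ (1 - x) ^ 2 :=
    calc (1 / 2 : ℝ) = (√2 / 2) ^ 2 := by rw [div_pow, Real.sq_sqrt zero_le_two]; norm_num
      _ ≤ (1 - x) ^ 2 := by gcongr; linarith
  have hinv : ((1 - x) ^ 2)⁻¹ ≤ (1 / 2)⁻¹ := inv_anti₀ one_half_pos hsq
  linarith

theorem two_mul_inv_le_one_sub_sqrt_two_div_two {t : ℝ} (ht : 4 + 2 * √2 ≤ t) :
    2 * t⁻¹ ≤ 1 - √2 / 2 := by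
  have ht_pos : 0 < t := ht.trans_lt' (by positivity)
  have hthreshold : (1 - √2 / 2) * (4 + 2 * √2) = 2 := by
    linear_combination -Real.sq_sqrt zero_le_two
  rw [← div_eq_mul_inv, div_le_iff₀ ht_pos]
  calc (2 : ℝ) = (1 - √2 / 2) * (4 + 2 * √2) := hthreshold.symm
    _ ≤ (1 - √2 / 2) * t :=
        mul_le_mul_of_nonneg_left ht (by linarith [Real.sqrt_two_lt_three_halves])

theorem norm_sub_le_iSup_of_norm_le {α E : Type*} [SeminormedAddCommGroup E] {D : Set α}
    {f g : α → E} {C C' : ℝ} (hf : ∀ w ∈ D, ‖f w‖ ≤ C) (hg : ∀ w ∈ D, ‖g w‖ ≤ C') {z : α}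
    (hz : z ∈ D) : ‖f z - g z‖ ≤ ⨆ w : D, ‖f w - g w‖ := by
  have hbdd : BddAbove (Set.range fun w : D => ‖f w - g w‖) :=
    ⟨C + C', Set.forall_mem_range.2 fun w => norm_sub_le_of_le (hf w w.2) (hg w w.2)⟩
  exact le_ciSup hbdd ⟨z, hz⟩

theorem stmt11_general {𝕜 A : Type*} [NormedDivisionRing 𝕜] [NormedRing A] [NormedAlgebra ℝ A]
    [CompleteSpace A] {q : 𝕜} (hq : 4 + 2 * √2 ≤ ‖q‖ ^ 2) {D : Set 𝕜} (hD : 0 ∉ D)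
    {c : ℕ → 𝕜 → A} (hc : ∀ j, 2 ≤ j → ∀ w, w ≠ 0 → ‖c j w‖ ≤ 2 ^ (j - 1) / ‖w‖) {y h : 𝕜 → A}
    (hy : ∀ w ∈ D, ‖y w‖ ≤ 1 / ‖q‖) (hh : ∀ w ∈ D, ‖h w‖ ≤ 1 / ‖q‖)
    (hyscale : ∀ z ∈ D, y (z / q) = ‖q‖⁻¹ • y z) (hhscale : ∀ z ∈ D, h (z / q) = ‖q‖⁻¹ • h z)
    {z : 𝕜} (hz : z ∈ D) :
    ‖∑' n, c (n + 2) (z / q) * y (z / q) ^ (n + 2) -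
        ∑' n, c (n + 2) (z / q) * h (z / q) ^ (n + 2)‖ ≤
      1 / ‖z‖ * ⨆ w : D, ‖y w - h w‖ := by
  have hq0 : q ≠ 0 := by
    rintro rfl
    rw [norm_zero, zero_pow two_ne_zero] at hq
    exact hq.not_gt (by positivity)
  have hz0 : z ≠ 0 := ne_of_mem_of_not_mem hz hD
  have hcoeff (n : ℕ) : ‖c (n + 2) (z / q)‖ ≤ 2 ^ (n + 1) * (‖q‖ / ‖z‖) := by
    simpa [div_eq_mul_inv] using hc (n + 2) (by omega) (z / q) (div_ne_zero hz0 hq0)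
  have hscaled {f : 𝕜 → A} (hf : ∀ w ∈ D, ‖f w‖ ≤ 1 / ‖q‖)
      (hfscale : ∀ z ∈ D, f (z / q) = ‖q‖⁻¹ • f z) : ‖f (z / q)‖ ≤ (‖q‖ ^ 2)⁻¹ := by
    rw [hfscale z hz, norm_smul, norm_inv, norm_norm, sq, mul_inv, ← one_div ‖q‖]
    gcongr
    exact hf z hz
  have hratio : 2 * (‖q‖ ^ 2)⁻¹ ≤ 1 - √2 / 2 := two_mul_inv_le_one_sub_sqrt_two_div_two hq
  have hratio_lt : 2 * (‖q‖ ^ 2)⁻¹ < 1 := hratio.trans_lt (sub_lt_self 1 (by positivity))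
  calc _ ≤ (((1 - 2 * (‖q‖ ^ 2)⁻¹) ^ 2)⁻¹ - 1) * (‖q‖ / ‖z‖ * ‖y (z / q) - h (z / q)‖) :=
        norm_tsum_mul_pow_sub_tsum_mul_pow_le hcoeff (hscaled hy hyscale) (hscaled hh hhscale)
          zero_le_two hratio_lt
    _ ≤ ‖q‖ / ‖z‖ * ‖y (z / q) - h (z / q)‖ :=
        mul_le_of_le_one_left (by positivity) (inv_one_sub_sq_sub_one_le_one hratio)
    _ = 1 / ‖z‖ * ‖y z - h z‖ := by
        rw [hyscale z hz, hhscale z hz, ← smul_sub, norm_smul, norm_inv, norm_norm]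
        field_simp [norm_ne_zero_iff.2 hq0]
    _ ≤ 1 / ‖z‖ * ⨆ w : D, ‖y w - h w‖ := by
        gcongr
        exact norm_sub_le_iSup_of_norm_le hy hh hz

/-- The operator `T[y](z) = ∑_{j≥2} c_j(z/q) y(z/q)^j` is a
contraction with ratio `1/|z|` on `D(ρ)` with `ρ = |q|/2`, `|q| ≥ 3`, with
respect to the sup-metric. -/
theorem stmt11 (q : ℂ) (hq : 3 ≤ ‖q‖)
    (c : ℕ → ℂ → ℂ)
    (hc : ∀ j : ℕ, 2 ≤ j → ∀ w : ℂ, w ≠ 0 → ‖c j w‖ ≤ 2 ^ (j - 1) / ‖w‖)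
    (y h : ℂ → ℂ)
    (hybd : ∀ w : ℂ, ‖q‖ / 2 ≤ |w.re| → ‖y w‖ ≤ 1 / ‖q‖)
    (hhbd : ∀ w : ℂ, ‖q‖ / 2 ≤ |w.re| → ‖h w‖ ≤ 1 / ‖q‖)
    (hyscale : ∀ z : ℂ, ‖q‖ / 2 ≤ |z.re| → y (z / q) = y z / (‖q‖ : ℂ))
    (hhscale : ∀ z : ℂ, ‖q‖ / 2 ≤ |z.re| → h (z / q) = h z / (‖q‖ : ℂ)) :
    ∀ z : ℂ, ‖q‖ / 2 ≤ |z.re| →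
      ‖(∑' n : ℕ, c (n + 2) (z / q) * y (z / q) ^ (n + 2)) -
        (∑' n : ℕ, c (n + 2) (z / q) * h (z / q) ^ (n + 2))‖ ≤
        (1 / ‖z‖) * ⨆ w : {w : ℂ // ‖q‖ / 2 ≤ |w.re|}, ‖y w.1 - h w.1‖ := by
  have hq0 : q ≠ 0 := norm_pos_iff.1 (by linarith)
  exact fun z hz => stmt11_general (D := {w : ℂ | ‖q‖ / 2 ≤ |w.re|})
    (by nlinarith [Real.sqrt_two_lt_three_halves]) (by simpa using hq0) hc hybd hhbd
    (by simpa [div_eq_inv_mul] using hyscale) (by simpa [div_eq_inv_mul] using hhscale) hz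
end

section
/- Let p ≥ 1 and t ≥ 1 be integers, let z ∈ ℂ with |z| ≥ 3, and let a_1,…,a_p, b_1,…,b_t ∈ ℂ satisfy |a_j| ≤ 1/|z| for all 1 ≤ j ≤ p and |b_k| ≤ 1/|z| for all 1 ≤ k ≤ t. Then there exists a sequence (c_j)_{j≥2} of complex numbers with |c_j| ≤ 2^{j−1}/|z| for every j ≥ 2, such that for every w ∈ ℂ with |w| < 1/2 one has 1 + b_1 w + … + b_t w^t ≠ 0 and (a_1 w + a_2 w² + … + a_p w^p)/(1 + b_1 w + … + b_t w^t) = a_1 w + ∑_{j=2}^{∞} c_j w^j, where the series converges absolutely. -/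
/-!
Dividing by `w` turns the quotient into `N(w) / D(w)` with `N = ∑ a_{j+1} Xʲ` and
`D = 1 + ∑ b_k Xᵏ`. Comparing coefficients in `C * D = N`, for the formal quotient `C`, gives
`C_n = N_n - ∑_{i<n} C_i D_{n-i}`. If `|a_j| ≤ A` and `|b_k| ≤ B`, then
`|C_n| ≤ A + B ∑_{i<n} |C_i|`, whose solution with equality is `A (B + 1)ⁿ`; so `C` converges
absolutely for `(B + 1) |w| < 1`. The case `N = 1` applies to `D⁻¹`, and evaluating
`D * D⁻¹ = 1` at `w` shows that `D(w) ≠ 0`. The theorem is the case `A = 1/|z|`, `B = 1`.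
-/

open Polynomial
open scoped PowerSeries

lemma coeff_eq_coeff_mul_sub_sum {R : Type*} [Ring R] (C : R⟦X⟧) {D : R⟦X⟧}
    (hD : PowerSeries.constantCoeff D = 1) (n : ℕ) :
    C.coeff n = (C * D).coeff n - ∑ i ∈ Finset.range n, C.coeff i * D.coeff (n - i) := by
  rw [PowerSeries.coeff_mul, Finset.Nat.sum_antidiagonal_eq_sum_range_succ
    (fun i j => C.coeff i * D.coeff j), Finset.sum_range_succ, Nat.sub_self,
    PowerSeries.coeff_zero_eq_constantCoeff_apply, hD, mul_one, add_sub_cancel_left]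

lemma le_mul_add_one_pow_of_le_add_mul_sum {u : ℕ → ℝ} {A B : ℝ} (hB : 0 ≤ B)
    (hu : ∀ n, u n ≤ A + B * ∑ i ∈ Finset.range n, u i) (n : ℕ) :
    u n ≤ A * (B + 1) ^ n := by
  induction n using Nat.strong_induction_on with
  | _ n ih =>
    calc u n ≤ A + B * ∑ i ∈ Finset.range n, u i := hu n
      _ ≤ A + B * ∑ i ∈ Finset.range n, A * (B + 1) ^ i := by
        gcongr with i hi
        exact ih i (Finset.mem_range.mp hi)
      _ = A * ((∑ i ∈ Finset.range n, (B + 1) ^ i) * B + 1) := by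
        rw [← Finset.mul_sum]
        ring
      _ = A * (B + 1) ^ n := by rw [geom_sum_mul_add]

lemma norm_coeff_le_of_norm_coeff_mul_le {R : Type*} [SeminormedRing R] {C D : R⟦X⟧} {A B : ℝ}
    (hD₀ : PowerSeries.constantCoeff D = 1) (hCD : ∀ n, ‖(C * D).coeff n‖ ≤ A)
    (hD : ∀ n, ‖D.coeff (n + 1)‖ ≤ B) (n : ℕ) :
    ‖C.coeff n‖ ≤ A * (B + 1) ^ n := by
  have hB : 0 ≤ B := (norm_nonneg _).trans (hD 0)
  refine le_mul_add_one_pow_of_le_add_mul_sum (u := fun n => ‖C.coeff n‖) hB (fun m => ?_) n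
  have hterm : ∀ i ∈ Finset.range m, ‖C.coeff i * D.coeff (m - i)‖ ≤ B * ‖C.coeff i‖ := by
    intro i hi
    obtain ⟨k, rfl⟩ := Nat.exists_eq_add_of_lt (Finset.mem_range.mp hi)
    rw [show i + k + 1 - i = k + 1 by lia, mul_comm B]
    exact norm_mul_le_of_le le_rfl (hD k)
  calc ‖C.coeff m‖
      ≤ ‖(C * D).coeff m‖ + ‖∑ i ∈ Finset.range m, C.coeff i * D.coeff (m - i)‖ := by
        rw [coeff_eq_coeff_mul_sub_sum C hD₀ m]
        exact norm_sub_le _ _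
    _ ≤ A + B * ∑ i ∈ Finset.range m, ‖C.coeff i‖ := by
        rw [Finset.mul_sum]
        exact add_le_add (hCD m) (norm_sum_le_of_le _ hterm)

lemma norm_coeff_sum_monomial_le {R : Type*} [SeminormedRing R] {s : Finset ℕ} {f : ℕ → R}
    {A : ℝ} (hA : 0 ≤ A) (hf : ∀ j ∈ s, ‖f j‖ ≤ A) (n : ℕ) :
    ‖(∑ j ∈ s, monomial j (f j)).coeff n‖ ≤ A := by
  simp only [finsetSum_coeff, coeff_monomial, Finset.sum_ite_eq']
  split_ifs with hn
  · exact hf n hn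
  · rwa [norm_zero]

lemma summable_norm_mul_pow_of_norm_le {R : Type*} [SeminormedRing R] [NormOneClass R]
    {f : ℕ → R} {A r : ℝ} {w : R} (hr : 0 ≤ r) (hf : ∀ n, ‖f n‖ ≤ A * r ^ n)
    (hw : r * ‖w‖ < 1) : Summable fun n => ‖f n * w ^ n‖ := by
  refine .of_nonneg_of_le (fun _ => norm_nonneg _) (fun n => ?_)
    ((summable_geometric_of_lt_one (by positivity) hw).mul_left A)
  calc ‖f n * w ^ n‖ ≤ A * r ^ n * ‖w‖ ^ n := norm_mul_le_of_le (hf n) (norm_pow_le w n)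
    _ = A * (r * ‖w‖) ^ n := by ring

lemma summable_norm_mul_pow_add_two {R : Type*} [SeminormedCommRing R] {f : ℕ → R} {w : R}
    (hf : Summable fun n => ‖f n * w ^ n‖) :
    Summable fun n => ‖f (n + 1) * w ^ (n + 2)‖ := by
  refine .of_nonneg_of_le (fun _ => norm_nonneg _) (fun n => ?_)
    (((summable_nat_add_iff 1).mpr hf).mul_left ‖w‖)
  rw [show f (n + 1) * w ^ (n + 2) = w * (f (n + 1) * w ^ (n + 1)) by ring]
  exact norm_mul_le _ _

lemma mul_eq_add_tsum_of_hasSum {R : Type*} [CommRing R] [TopologicalSpace R]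
    [IsTopologicalRing R] [T2Space R] {f : ℕ → R} {w s : R}
    (hf : HasSum (fun n => f n * w ^ n) s) :
    w * s = f 0 * w + ∑' n, f (n + 1) * w ^ (n + 2) := by
  have htail : HasSum (fun n => w * (f (n + 1) * w ^ (n + 1))) (w * (s - f 0)) := by
    simpa using ((hasSum_nat_add_iff' 1).mpr hf).mul_left w
  have hpow : ∀ n, w * (f (n + 1) * w ^ (n + 1)) = f (n + 1) * w ^ (n + 2) := fun n => by ring
  rw [funext hpow] at htail
  rw [htail.tsum_eq]
  ring

lemma hasSum_coeff_mul {R : Type*} [NormedCommRing R] [CompleteSpace R] {F G : R⟦X⟧} {w f g : R}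
    (hF : HasSum (fun n => F.coeff n * w ^ n) f) (hG : HasSum (fun n => G.coeff n * w ^ n) g)
    (hF' : Summable fun n => ‖F.coeff n * w ^ n‖) (hG' : Summable fun n => ‖G.coeff n * w ^ n‖) :
    HasSum (fun n => (F * G).coeff n * w ^ n) (f * g) := by
  have hcoeff : ∀ n, (F * G).coeff n * w ^ n = ∑ q ∈ Finset.HasAntidiagonal.antidiagonal n,
      F.coeff q.1 * w ^ q.1 * (G.coeff q.2 * w ^ q.2) := by
    intro n
    rw [PowerSeries.coeff_mul, Finset.sum_mul]
    refine Finset.sum_congr rfl fun q hq => ?_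
    rw [← Finset.HasAntidiagonal.mem_antidiagonal.mp hq]
    ring
  simp_rw [hcoeff]
  rw [← hF.tsum_eq, ← hG.tsum_eq, tsum_mul_tsum_eq_tsum_sum_antidiagonal_of_summable_norm hF' hG']
  exact (summable_norm_sum_mul_antidiagonal_of_summable_norm hF' hG').of_norm.hasSum

lemma hasSum_coeff_polynomial {R : Type*} [CommSemiring R] [TopologicalSpace R] (P : R[X])
    (w : R) : HasSum (fun n => (P : R⟦X⟧).coeff n * w ^ n) (P.eval w) := by
  simp only [Polynomial.coeff_coe]
  rw [eval_eq_sum_range]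
  refine hasSum_sum_of_ne_finset_zero fun n hn => ?_
  rw [coeff_eq_zero_of_natDegree_lt (by simpa [Nat.lt_succ_iff] using hn), zero_mul]

lemma eval_sum_monomial {R : Type*} [CommSemiring R] (s : Finset ℕ) (f : ℕ → R) (w : R) :
    (∑ j ∈ s, monomial j (f j)).eval w = ∑ j ∈ s, f j * w ^ j := by
  simp only [eval_finsetSum, eval_monomial]

section Quotient

variable {𝕜 : Type*} [NormedField 𝕜]

lemma norm_coeff_mul_inv_le {N D : 𝕜⟦X⟧} {A B : ℝ}
    (hD₀ : PowerSeries.constantCoeff D = 1) (hN : ∀ n, ‖N.coeff n‖ ≤ A)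
    (hD : ∀ n, ‖D.coeff (n + 1)‖ ≤ B) (n : ℕ) :
    ‖(N * D⁻¹).coeff n‖ ≤ A * (B + 1) ^ n := by
  have hD_ne : PowerSeries.constantCoeff D ≠ 0 := hD₀ ▸ one_ne_zero
  refine norm_coeff_le_of_norm_coeff_mul_le hD₀ (fun m => ?_) hD n
  rw [mul_assoc, PowerSeries.inv_mul_cancel D hD_ne, mul_one]
  exact hN m

variable [CompleteSpace 𝕜]

lemma ne_zero_and_hasSum_coeff_inv {D : 𝕜⟦X⟧} {w d : 𝕜} (hD₀ : PowerSeries.constantCoeff D ≠ 0)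
    (hd : HasSum (fun n => D.coeff n * w ^ n) d) (hD : Summable fun n => ‖D.coeff n * w ^ n‖)
    (hDinv : Summable fun n => ‖D⁻¹.coeff n * w ^ n‖) :
    d ≠ 0 ∧ HasSum (fun n => D⁻¹.coeff n * w ^ n) d⁻¹ := by
  obtain ⟨e, he⟩ := hDinv.of_norm
  have hone : HasSum (fun n => (1 : 𝕜⟦X⟧).coeff n * w ^ n) 1 := by
    simpa using hasSum_coeff_polynomial (1 : 𝕜[X]) w
  have hde : d * e = 1 := by
    have hmul := hasSum_coeff_mul hd he hD hDinv
    rw [PowerSeries.mul_inv_cancel D hD₀] at hmul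
    exact hmul.unique hone
  exact ⟨left_ne_zero_of_mul_eq_one hde, eq_inv_of_mul_eq_one_right hde ▸ he⟩

lemma ne_zero_and_hasSum_coeff_mul_inv {N D : 𝕜⟦X⟧} {A B : ℝ} {w x d : 𝕜}
    (hD₀ : PowerSeries.constantCoeff D = 1) (hN : ∀ n, ‖N.coeff n‖ ≤ A)
    (hD : ∀ n, ‖D.coeff (n + 1)‖ ≤ B) (hw : (B + 1) * ‖w‖ < 1)
    (hx : HasSum (fun n => N.coeff n * w ^ n) x) (hd : HasSum (fun n => D.coeff n * w ^ n) d) :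
    d ≠ 0 ∧ HasSum (fun n => (N * D⁻¹).coeff n * w ^ n) (x / d) := by
  have hB : 0 ≤ B := (norm_nonneg _).trans (hD 0)
  have hw_one : 1 * ‖w‖ < 1 := by nlinarith [norm_nonneg w]
  have hD_ne : PowerSeries.constantCoeff D ≠ 0 := hD₀ ▸ one_ne_zero
  have hN_summable : Summable fun n => ‖N.coeff n * w ^ n‖ :=
    summable_norm_mul_pow_of_norm_le zero_le_one (A := A) (by simpa using hN) hw_one
  have hD_summable : Summable fun n => ‖D.coeff n * w ^ n‖ := by
    refine summable_norm_mul_pow_of_norm_le zero_le_one (A := B + 1) (fun n => ?_) hw_one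
    cases n with
    | zero => simpa [hD₀] using hB
    | succ n => simpa using (hD n).trans (le_add_of_nonneg_right zero_le_one)
  have hDinv_summable : Summable fun n => ‖D⁻¹.coeff n * w ^ n‖ := by
    refine summable_norm_mul_pow_of_norm_le (A := 1) (by positivity) (fun n => ?_) hw
    have hone : ∀ m, ‖(1 : 𝕜⟦X⟧).coeff m‖ ≤ 1 := fun m => by
      rw [PowerSeries.coeff_one]
      split_ifs <;> simp
    simpa using norm_coeff_mul_inv_le hD₀ hone hD n
  obtain ⟨hd_ne, hd_inv⟩ := ne_zero_and_hasSum_coeff_inv hD_ne hd hD_summable hDinv_summable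
  refine ⟨hd_ne, ?_⟩
  rw [div_eq_mul_inv]
  exact hasSum_coeff_mul hx hd_inv hN_summable hDinv_summable

lemma exists_coeff_bound_and_hasSum_eval_div {N D : 𝕜[X]} {A B : ℝ} (hD₀ : D.coeff 0 = 1)
    (hN : ∀ n, ‖N.coeff n‖ ≤ A) (hD : ∀ n, ‖D.coeff (n + 1)‖ ≤ B) :
    ∃ c : ℕ → 𝕜, c 0 = N.coeff 0 ∧ (∀ n, ‖c n‖ ≤ A * (B + 1) ^ n) ∧
      ∀ w : 𝕜, (B + 1) * ‖w‖ < 1 →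
        D.eval w ≠ 0 ∧ HasSum (fun n => c n * w ^ n) (N.eval w / D.eval w) := by
  have hD₀' : PowerSeries.constantCoeff (D : 𝕜⟦X⟧) = 1 := by
    rwa [Polynomial.constantCoeff_coe]
  simp only [← Polynomial.coeff_coe] at hN hD
  refine ⟨fun n => ((N : 𝕜⟦X⟧) * (D : 𝕜⟦X⟧)⁻¹).coeff n, ?_, norm_coeff_mul_inv_le hD₀' hN hD,
    fun w hw => ne_zero_and_hasSum_coeff_mul_inv hD₀' hN hD hw
      (hasSum_coeff_polynomial N w) (hasSum_coeff_polynomial D w)⟩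
  simp [hD₀', coeff_zero_eq_eval_zero]

theorem stmt17_general {p t : ℕ} (hp : 1 ≤ p) {a b : ℕ → 𝕜} {A B : ℝ} (hB : 0 ≤ B)
    (ha : ∀ j ∈ Finset.Icc 1 p, ‖a j‖ ≤ A) (hb : ∀ k ∈ Finset.Icc 1 t, ‖b k‖ ≤ B) :
    ∃ c : ℕ → 𝕜, (∀ j : ℕ, 2 ≤ j → ‖c j‖ ≤ A * (B + 1) ^ (j - 1)) ∧
      ∀ w : 𝕜, (B + 1) * ‖w‖ < 1 →
        (1 + ∑ k ∈ Finset.Icc 1 t, b k * w ^ k) ≠ 0 ∧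
        Summable (fun n : ℕ => ‖c (n + 2) * w ^ (n + 2)‖) ∧
        (∑ j ∈ Finset.Icc 1 p, a j * w ^ j) /
            (1 + ∑ k ∈ Finset.Icc 1 t, b k * w ^ k) =
          a 1 * w + ∑' n : ℕ, c (n + 2) * w ^ (n + 2) := by
  let N : 𝕜[X] := ∑ j ∈ Finset.range p, monomial j (a (j + 1))
  let D : 𝕜[X] := 1 + ∑ k ∈ Finset.Icc 1 t, monomial k (b k)
  have hA : 0 ≤ A := (norm_nonneg _).trans (ha 1 (Finset.mem_Icc.mpr ⟨le_rfl, hp⟩))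
  have hN : ∀ n, ‖N.coeff n‖ ≤ A := norm_coeff_sum_monomial_le hA fun j hj =>
    ha (j + 1) (Finset.mem_Icc.mpr ⟨j.succ_pos, Finset.mem_range.mp hj⟩)
  have hN₀ : N.coeff 0 = a 1 := by
    simp [N, finsetSum_coeff, coeff_monomial, Nat.pos_iff_ne_zero.mp hp]
  have hD : ∀ n, ‖D.coeff (n + 1)‖ ≤ B := fun n => by
    rw [coeff_add, coeff_one, if_neg n.succ_ne_zero, zero_add]
    exact norm_coeff_sum_monomial_le hB hb (n + 1)
  have hD₀ : D.coeff 0 = 1 := by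
    simp [D, coeff_monomial]
  obtain ⟨c, hc₀, hc, hsum⟩ := exists_coeff_bound_and_hasSum_eval_div hD₀ hN hD
  refine ⟨fun j => c (j - 1), fun j _ => hc (j - 1), fun w hw => ?_⟩
  have hNw : ∑ j ∈ Finset.Icc 1 p, a j * w ^ j = w * N.eval w := by
    rw [eval_sum_monomial, Finset.mul_sum, ← Finset.Ico_add_one_right_eq_Icc,
      Finset.sum_Ico_eq_sum_range, Nat.add_sub_cancel]
    exact Finset.sum_congr rfl fun j _ => by ring_nf
  have hDw : 1 + ∑ k ∈ Finset.Icc 1 t, b k * w ^ k = D.eval w := by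
    rw [eval_add, eval_one, eval_sum_monomial]
  obtain ⟨hne, hval⟩ := hsum w hw
  have hsummable : Summable fun n => ‖c n * w ^ n‖ :=
    summable_norm_mul_pow_of_norm_le (by positivity) hc hw
  rw [hNw, hDw, mul_div_assoc, ← hN₀, ← hc₀]
  exact ⟨hne, summable_norm_mul_pow_add_two hsummable, mul_eq_add_tsum_of_hasSum hval⟩

end Quotient

/-- Expansion of `R(z,w)` as a power series around `w = 0`:
with `|z| ≥ 3` and `|a_j|, |b_k| ≤ 1/|z|`, there are coefficients `c_j` with
`|c_j| ≤ 2^{j-1}/|z|` such that, for `|w| < 1/2`, the denominator is nonzero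
and `R(z,w) = a₁ w + ∑_{j≥2} c_j wʲ`, the series converging absolutely. -/
theorem stmt17 (p t : ℕ) (hp : 1 ≤ p) (ht : 1 ≤ t) (z : ℂ) (hz : 3 ≤ ‖z‖)
    (a b : ℕ → ℂ)
    (ha : ∀ j ∈ Finset.Icc 1 p, ‖a j‖ ≤ 1 / ‖z‖)
    (hb : ∀ k ∈ Finset.Icc 1 t, ‖b k‖ ≤ 1 / ‖z‖) :
    ∃ c : ℕ → ℂ, (∀ j : ℕ, 2 ≤ j → ‖c j‖ ≤ 2 ^ (j - 1) / ‖z‖) ∧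
      ∀ w : ℂ, ‖w‖ < 1 / 2 →
        (1 + ∑ k ∈ Finset.Icc 1 t, b k * w ^ k) ≠ 0 ∧
        Summable (fun n : ℕ => ‖c (n + 2) * w ^ (n + 2)‖) ∧
        (∑ j ∈ Finset.Icc 1 p, a j * w ^ j) /
            (1 + ∑ k ∈ Finset.Icc 1 t, b k * w ^ k) =
          a 1 * w + ∑' n : ℕ, c (n + 2) * w ^ (n + 2) := by
  have hb_one : ∀ k ∈ Finset.Icc 1 t, ‖b k‖ ≤ 1 := fun k hk =>
    (hb k hk).trans (div_le_one_of_le₀ (by linarith) (norm_nonneg z))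
  simpa only [one_add_one_eq_two, one_div_mul_eq_div, lt_div_iff₀' (zero_lt_two (α := ℝ))]
    using stmt17_general hp zero_le_one ha hb_one
end

section
/- Let q ∈ ℂ with |q| ≥ 6, let ρ > 0 and σ > 0 satisfy ρ² + σ² ≤ |q|², and let λ be a real number with 0 ≤ λ ≤ 1/|q|. For each integer j ≥ 2 let c_j : ℂ → ℂ satisfy |c_j(w)| ≤ 2^{j−1} |q|^{(j−1)|w|} for all w ∈ ℂ with |w| ≤ |q|. Let y : ℂ → ℂ satisfy |y(w)| ≤ 1/|q| for all w ∈ D(ρ,σ) and y(z/q^m) = y(z)/|q|^m for all z ∈ D(ρ,σ) and all natural numbers m. Then for every z ∈ D(ρ,σ), the double series ∑_{j=2}^{∞} ∑_{m=0}^{∞} λ^m c_j(z/q^{m+1}) y(z/q^{m+1})^j converges absolutely and its sum T[y](z) satisfies |T[y](z)| ≤ 1/(4|q|). -/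
/-!
Write `Q = ‖q‖`, `M = ‖y z‖` and `w = z / q ^ (m + 1)`. Since `‖z‖ ≤ Q`, one has `‖w‖ ≤ 1`, so
`‖c j w‖ ≤ (2 Q) ^ (j - 1)`, while the scaling relation gives `‖y w‖ ≤ M / Q ^ (m + 1)`. The powers
of `Q` gained from `y w ^ j` absorb those lost to `c j w`: the term of index `(j, m)` is at most
`(2 M² / Q) (2 M) ^ (j - 2) (‖λ‖ / Q²) ^ m`, so the double series is dominated by a product of two
geometric series.
-/

lemma norm_le_of_abs_re_le_of_abs_im_le {z : ℂ} {ρ σ R : ℝ} (hre : |z.re| ≤ ρ) (him : |z.im| ≤ σ)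
    (hR : 0 ≤ R) (hρσ : ρ ^ 2 + σ ^ 2 ≤ R ^ 2) : ‖z‖ ≤ R := by
  rw [Complex.norm_eq_sqrt_sq_add_sq]
  refine Real.sqrt_le_iff.mpr ⟨hR, le_trans ?_ hρσ⟩
  exact add_le_add (sq_le_sq' (abs_le.mp hre).1 (abs_le.mp hre).2)
    (sq_le_sq' (abs_le.mp him).1 (abs_le.mp him).2)

lemma norm_div_pow_succ_le_one {𝕜 : Type*} [NormedDivisionRing 𝕜] {q z : 𝕜} (hq : 1 ≤ ‖q‖)
    (hz : ‖z‖ ≤ ‖q‖) (m : ℕ) : ‖z / q ^ (m + 1)‖ ≤ 1 := by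
  rw [norm_div, norm_pow]
  exact div_le_one_of_le₀ (hz.trans (le_self_pow₀ hq m.succ_ne_zero)) (by positivity)

lemma norm_pow_mul_mul_pow_le {A : Type*} [SeminormedRing A] [NormOneClass A] {a b u : A}
    {B s : ℝ} (hb : ‖b‖ ≤ B) (hu : ‖u‖ ≤ s) (m n : ℕ) :
    ‖a ^ m * b * u ^ n‖ ≤ ‖a‖ ^ m * B * s ^ n := by
  have hB : 0 ≤ B := (norm_nonneg b).trans hb
  calc ‖a ^ m * b * u ^ n‖ ≤ ‖a ^ m‖ * ‖b‖ * ‖u ^ n‖ := norm_mul₃_le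
    _ ≤ ‖a‖ ^ m * B * ‖u‖ ^ n := by gcongr <;> exact norm_pow_le _ _
    _ ≤ ‖a‖ ^ m * B * s ^ n := by gcongr

lemma rpow_natCast_mul_le_pow {Q t : ℝ} (hQ : 1 ≤ Q) (ht : t ≤ 1) (n : ℕ) :
    Q ^ (n * t) ≤ Q ^ n := by
  rw [← Real.rpow_natCast Q n]
  exact Real.rpow_le_rpow_of_exponent_le hQ (mul_le_of_le_one_right n.cast_nonneg ht)

lemma hasSum_geometric_mul_geometric {r s : ℝ} (hr₀ : 0 ≤ r) (hr₁ : r < 1) (hs₀ : 0 ≤ s)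
    (hs₁ : s < 1) :
    HasSum (fun p : ℕ × ℕ => r ^ p.1 * s ^ p.2) ((1 - r)⁻¹ * (1 - s)⁻¹) := by
  have hr := hasSum_geometric_of_lt_one hr₀ hr₁
  have hs := hasSum_geometric_of_lt_one hs₀ hs₁
  exact hr.mul hs (hr.summable.mul_of_nonneg hs.summable
    (fun _ => by positivity) (fun _ => by positivity))

lemma pow_mul_two_mul_pow_mul_div_pow_le {Q M a : ℝ} (hQ : 1 ≤ Q) (hM : 0 ≤ M) (ha : 0 ≤ a)
    (i m : ℕ) :
    a ^ m * (2 * Q) ^ (i + 1) * (M / Q ^ (m + 1)) ^ (i + 2) ≤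
      2 * M ^ 2 / Q * ((2 * M) ^ i * (a / Q ^ 2) ^ m) := by
  have hQ₀ : 0 < Q := by linarith
  have hdecay : (1 / Q ^ m) ^ (i + 2) ≤ (1 / Q ^ m) ^ 2 :=
    pow_le_pow_of_le_one (by positivity)
      (div_le_one_of_le₀ (one_le_pow₀ hQ) (by positivity)) (by omega)
  have hbase : (2 * Q) ^ (i + 1) * (M / Q) ^ (i + 2) = 2 * M ^ 2 / Q * (2 * M) ^ i := by
    calc (2 * Q) ^ (i + 1) * (M / Q) ^ (i + 2) = (2 * Q * (M / Q)) ^ (i + 1) * (M / Q) := by ring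
      _ = (2 * M) ^ (i + 1) * (M / Q) := by rw [mul_assoc, mul_div_cancel₀ M hQ₀.ne']
      _ = 2 * M ^ 2 / Q * (2 * M) ^ i := by ring
  have hratio : a ^ m * (1 / Q ^ m) ^ 2 = (a / Q ^ 2) ^ m := by
    rw [div_pow a, one_div_pow, ← pow_mul, ← pow_mul, mul_comm m 2, mul_one_div]
  calc a ^ m * (2 * Q) ^ (i + 1) * (M / Q ^ (m + 1)) ^ (i + 2)
      = a ^ m * ((2 * Q) ^ (i + 1) * (M / Q) ^ (i + 2)) * (1 / Q ^ m) ^ (i + 2) := by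
        rw [pow_succ' Q, ← div_div, div_eq_mul_one_div (M / Q), mul_pow (M / Q)]
        ring
    _ ≤ a ^ m * ((2 * Q) ^ (i + 1) * (M / Q) ^ (i + 2)) * (1 / Q ^ m) ^ 2 := by gcongr
    _ = ((2 * Q) ^ (i + 1) * (M / Q) ^ (i + 2)) * (a ^ m * (1 / Q ^ m) ^ 2) := by ring
    _ = 2 * M ^ 2 / Q * ((2 * M) ^ i * (a / Q ^ 2) ^ m) := by rw [hbase, hratio, mul_assoc]

lemma two_mul_sq_div_le_one_div_four_mul {Q M a : ℝ} (hQ : 1 ≤ Q) (hM₀ : 0 ≤ M) (hM : M ≤ 1 / 6)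
    (ha₀ : 0 ≤ a) (ha : a ≤ 1 / 6) :
    2 * M ^ 2 / (Q * (1 - 2 * M) * (1 - a / Q ^ 2)) ≤ 1 / (4 * Q) := by
  have hratio : a / Q ^ 2 ≤ 1 / 6 := (div_le_self ha₀ (one_le_pow₀ hQ)).trans ha
  have hden : 5 / 9 ≤ (1 - 2 * M) * (1 - a / Q ^ 2) := by nlinarith
  have hnum : 8 * M ^ 2 ≤ (1 - 2 * M) * (1 - a / Q ^ 2) := by nlinarith
  rw [mul_assoc, div_le_div_iff₀ (mul_pos (by linarith) (by linarith)) (by linarith)]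
  calc 2 * M ^ 2 * (4 * Q) = Q * (8 * M ^ 2) := by ring
    _ ≤ Q * ((1 - 2 * M) * (1 - a / Q ^ 2)) := by gcongr
    _ = 1 * (Q * ((1 - 2 * M) * (1 - a / Q ^ 2))) := (one_mul _).symm

theorem stmt18_general {𝕜 A : Type*} [NormedDivisionRing 𝕜] [SeminormedRing A] [NormOneClass A]
    {q z : 𝕜} (hq : 1 ≤ ‖q‖) (hz : ‖z‖ ≤ ‖q‖) {a : A} (ha : ‖a‖ < ‖q‖ ^ 2) {c : ℕ → 𝕜 → A}
    (hc : ∀ j : ℕ, 2 ≤ j → ∀ w : 𝕜, ‖w‖ ≤ 1 →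
      ‖c j w‖ ≤ 2 ^ (j - 1) * ‖q‖ ^ (((j : ℝ) - 1) * ‖w‖))
    {y : 𝕜 → A} (hyz : ‖y z‖ < 1 / 2)
    (hyscale : ∀ m : ℕ, ‖y (z / q ^ m)‖ ≤ ‖y z‖ / ‖q‖ ^ m) :
    Summable (fun jm : ℕ × ℕ =>
      ‖a ^ jm.2 * c (jm.1 + 2) (z / q ^ (jm.2 + 1)) * y (z / q ^ (jm.2 + 1)) ^ (jm.1 + 2)‖) ∧
    ∑' jm : ℕ × ℕ,
      ‖a ^ jm.2 * c (jm.1 + 2) (z / q ^ (jm.2 + 1)) * y (z / q ^ (jm.2 + 1)) ^ (jm.1 + 2)‖ ≤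
        2 * ‖y z‖ ^ 2 / (‖q‖ * (1 - 2 * ‖y z‖) * (1 - ‖a‖ / ‖q‖ ^ 2)) := by
  have hcoeff (i m : ℕ) : ‖c (i + 2) (z / q ^ (m + 1))‖ ≤ (2 * ‖q‖) ^ (i + 1) := by
    have hw := norm_div_pow_succ_le_one hq hz m
    calc ‖c (i + 2) (z / q ^ (m + 1))‖
        ≤ 2 ^ (i + 1) * ‖q‖ ^ (((i + 2 : ℕ) - 1 : ℝ) * ‖z / q ^ (m + 1)‖) :=
          hc (i + 2) (by omega) _ hw
      _ = 2 ^ (i + 1) * ‖q‖ ^ (((i + 1 : ℕ) : ℝ) * ‖z / q ^ (m + 1)‖) := by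
          congr 3
          push_cast
          ring
      _ ≤ 2 ^ (i + 1) * ‖q‖ ^ (i + 1) := by
          gcongr
          exact rpow_natCast_mul_le_pow hq hw (i + 1)
      _ = (2 * ‖q‖) ^ (i + 1) := (mul_pow ..).symm
  have hterm (jm : ℕ × ℕ) :
      ‖a ^ jm.2 * c (jm.1 + 2) (z / q ^ (jm.2 + 1)) * y (z / q ^ (jm.2 + 1)) ^ (jm.1 + 2)‖ ≤
        2 * ‖y z‖ ^ 2 / ‖q‖ * ((2 * ‖y z‖) ^ jm.1 * (‖a‖ / ‖q‖ ^ 2) ^ jm.2) :=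
    (norm_pow_mul_mul_pow_le (hcoeff _ _) (hyscale _) _ _).trans
      (pow_mul_two_mul_pow_mul_div_pow_le hq (norm_nonneg _) (norm_nonneg _) _ _)
  have hgeom := (hasSum_geometric_mul_geometric (r := 2 * ‖y z‖) (s := ‖a‖ / ‖q‖ ^ 2)
    (by positivity) (by linarith) (by positivity)
    ((div_lt_one (by positivity)).mpr ha)).mul_left (2 * ‖y z‖ ^ 2 / ‖q‖)
  have hsum := Summable.of_nonneg_of_le (fun _ => norm_nonneg _) hterm hgeom.summable
  refine ⟨hsum, (hasSum_le hterm hsum.hasSum hgeom).trans_eq ?_⟩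
  rw [← mul_inv, ← div_eq_mul_inv, div_div, mul_assoc]

/-- With `|q| ≥ 6`, `ρ² + σ² ≤ |q|²`, `0 ≤ λ ≤ 1/|q|`, and
`|c_j(w)| ≤ 2^{j-1} |q|^{(j-1)|w|}` for `|w| ≤ |q|`, the double series
`T[y](z) = ∑_{j≥2} ∑_{m≥0} λ^m c_j(z/q^{m+1}) y(z/q^{m+1})^j` converges
absolutely on `D(ρ,σ)` and its sum is bounded by `1/(4|q|)`. -/
theorem stmt18 (q : ℂ) (hq : 6 ≤ ‖q‖) (ρ σ : ℝ) (hρ : 0 < ρ) (hσ : 0 < σ)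
    (hρσ : ρ ^ 2 + σ ^ 2 ≤ ‖q‖ ^ 2) (lam : ℝ) (hlam0 : 0 ≤ lam)
    (hlam1 : lam ≤ 1 / ‖q‖)
    (c : ℕ → ℂ → ℂ)
    (hc : ∀ j : ℕ, 2 ≤ j → ∀ w : ℂ, ‖w‖ ≤ ‖q‖ →
      ‖c j w‖ ≤ 2 ^ (j - 1) * ‖q‖ ^ (((j : ℝ) - 1) * ‖w‖))
    (y : ℂ → ℂ)
    (hybd : ∀ w : ℂ, |w.re| ≤ ρ → |w.im| ≤ σ → ‖y w‖ ≤ 1 / ‖q‖)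
    (hyscale : ∀ (m : ℕ) (z : ℂ), |z.re| ≤ ρ → |z.im| ≤ σ →
      y (z / q ^ m) = y z / (‖q‖ : ℂ) ^ m) :
    ∀ z : ℂ, |z.re| ≤ ρ → |z.im| ≤ σ →
      Summable (fun jm : ℕ × ℕ =>
        ‖(lam : ℂ) ^ jm.2 * c (jm.1 + 2) (z / q ^ (jm.2 + 1)) *
          y (z / q ^ (jm.2 + 1)) ^ (jm.1 + 2)‖) ∧
      ‖∑' jm : ℕ × ℕ, (lam : ℂ) ^ jm.2 * c (jm.1 + 2) (z / q ^ (jm.2 + 1)) *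
          y (z / q ^ (jm.2 + 1)) ^ (jm.1 + 2)‖ ≤ 1 / (4 * ‖q‖) := by
  intro z hre him
  have h6 : 1 / ‖q‖ ≤ 1 / 6 := one_div_le_one_div_of_le (by norm_num) hq
  have hy : ‖y z‖ ≤ 1 / 6 := (hybd z hre him).trans h6
  have hlam : ‖(lam : ℂ)‖ ≤ 1 / 6 := by rw [Complex.norm_of_nonneg hlam0]; exact hlam1.trans h6
  obtain ⟨hsum, hle⟩ := stmt18_general (q := q) (a := (lam : ℂ)) (c := c) (y := y) (by linarith)
    (norm_le_of_abs_re_le_of_abs_im_le hre him (norm_nonneg q) hρσ) (by nlinarith)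
    (fun j hj w hw => hc j hj w (by linarith)) (by linarith)
    (fun m => by simp [hyscale m z hre him])
  exact ⟨hsum, (norm_tsum_le_tsum_norm hsum).trans <| hle.trans <|
    two_mul_sq_div_le_one_div_four_mul (by linarith) (norm_nonneg _) hy (norm_nonneg _) hlam⟩
end
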